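/- Let n ≥ 4 and let ω0 be the standard symplectic form on ℝ^{2n} with coordinates ordered (p1,q1,…,pn,qn). Then the curve-germ f(t) = (t^4, t^{11}, t^5, 0, t^6, 0, t^7, 0, …, 0) has Lagrangian tangency order Lt(f) = 11; that is: (a) for every Lagrangian defining map H = (H_1,…,H_n):(ℝ^{2n},0)→(ℝ^n,0), min_{1≤i≤n} ord(H_i∘f) ≤ 11, and (b) there exists a Lagrangian defining map H with min_{1≤i≤n} ord(H_i∘f) = 11. -/

import Mathlib

/-!
Near `0` the fibre `H⁻¹(0)` is straightened by a diffeomorphism `G` tangent to the identity with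
`H ∘ G = DH(0)`. Differentiating the isotropy of the fibres along `G` shows that, for
`u, v, w ∈ ker DH(0)` and any `u', v'` with `DH(0) u' = -D²H(0)(w, u)` and
`DH(0) v' = -D²H(0)(w, v)`, one has `ω(u', v) + ω(u, v') = 0`.

Write the curve as `t⁴ v₄ + t⁵ v₅ + t⁶ v₆ + t⁷ v₇ + t¹¹ v₁₁`, `A = DH(0)`, `B = D²H(0)`. If `H`
vanished to order at least `12` along it, the Taylor coefficients of degrees `4, …, 7` would put
`v₄, …, v₇` in `ker A`, those of degrees `8` and `9` would give `B(v₄, v₄) = B(v₅, v₄) = 0`, and the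
one of degree `11 = 4 + 7 = 5 + 6` would give `A v₁₁ + B(v₄, v₇) + B(v₅, v₆) = 0`. Choosing `a`, `b`
with `A a = -B(v₄, v₇)` and `A b = -B(v₅, v₆)`, the relation above yields
`ω(v₄, a) = ω(v₄, b) = 0`, while `v₁₁ - a - b ∈ ker A`; hence `ω(v₄, v₁₁) = 0`, whereas
`ω₀(∂/∂p₁, ∂/∂q₁) = 1`. The map `(q₁, …, qₙ)` attains the order `11`.
-/

open Filter Topology

noncomputable section

/-- The standard symplectic form on `ℝ^{2n}`, coordinates ordered `(p₁,q₁,…,pₙ,qₙ)`. -/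
def omega0 (n : ℕ) (u v : Fin (2*n) → ℝ) : ℝ :=
  ∑ i : Fin n,
    (u ⟨2*i.val, by have := i.isLt; omega⟩ * v ⟨2*i.val+1, by have := i.isLt; omega⟩
      - u ⟨2*i.val+1, by have := i.isLt; omega⟩ * v ⟨2*i.val, by have := i.isLt; omega⟩)

/-- A Lagrangian defining map: a smooth map-germ `H : (ℝ^{2n},0) → (ℝ^n,0)` whose
derivative at `0` has rank `n` and such that, near `0`, the kernel of `DH(x)` is
`ω₀`-isotropic at every point `x` of `H⁻¹(0)`. -/
def IsLagrangianMap (n : ℕ) (H : (Fin (2*n) → ℝ) → (Fin n → ℝ)) : Prop :=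
  H 0 = 0 ∧ (∃ U ∈ 𝓝 (0 : Fin (2*n) → ℝ), ContDiffOn ℝ (⊤ : ℕ∞) H U) ∧
  Function.Surjective ⇑(fderiv ℝ H 0) ∧
  ∀ᶠ x in 𝓝 (0 : Fin (2*n) → ℝ), H x = 0 → ∀ u v : Fin (2*n) → ℝ,
    fderiv ℝ H x u = 0 → fderiv ℝ H x v = 0 → omega0 n u v = 0

/-- Pad a vector in `ℝ^k` with trailing zeros to a vector in `ℝ^m`. -/
def padTo (m k : ℕ) (w : Fin k → ℝ) : Fin m → ℝ :=
  fun i => if h : (i : ℕ) < k then w ⟨i, h⟩ else 0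

/-- Row 17 of Table 2: the curve `f(t) = (t⁴, t¹¹, t⁵, 0, t⁶, 0, t⁷, 0, …, 0)` in
`ℝ^{2n}`, `n ≥ 4`. -/
def f17 (n : ℕ) : ℝ → (Fin (2*n) → ℝ) :=
  fun t => padTo (2*n) 8 ![t^4, t^11, t^5, 0, t^6, 0, t^7, 0]

open scoped Nat

section Taylor

variable {E F : Type*} [NormedAddCommGroup E] [NormedSpace ℝ E] [NormedAddCommGroup F]
  [NormedSpace ℝ F]

lemma taylor_isBigO_of_contDiffAt [CompleteSpace F] {f : E → F} {x : E} {N : ℕ}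
    (hf : ContDiffAt ℝ N f x) :
    (fun y ↦ f (x + y) - ∑ k ∈ Finset.range N, (k ! : ℝ)⁻¹ • iteratedFDeriv ℝ k f x fun _ ↦ y)
      =O[𝓝 0] fun y ↦ ‖y‖ ^ N := by
  have htranslate : Tendsto (x + ·) (𝓝 (0 : E)) (𝓝 x) := by
    simpa using (continuous_const_add x).tendsto 0
  obtain _ | n := N
  · simpa using (hf.continuousAt.tendsto.comp htranslate).isBigO_one ℝ
  obtain ⟨C, hC⟩ := (hf.continuousAt_iteratedFDeriv le_rfl).norm.isBoundedUnder_le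
  obtain ⟨r, hr, hball⟩ := Metric.eventually_nhds_iff_ball.1 <|
    (hf.eventually (by simp)).and (eventually_map.1 hC)
  refine .of_bound ((n ! : ℝ)⁻¹ * C) ?_
  filter_upwards [Metric.ball_mem_nhds (0 : E) hr] with y hy
  have hsegment (t : ℝ) (ht : t ∈ Set.Icc (0 : ℝ) 1) : x + t • y ∈ Metric.ball x r := by
    have : ‖t • y‖ ≤ ‖y‖ := by
      rw [norm_smul, Real.norm_of_nonneg ht.1]
      exact mul_le_of_le_one_left (norm_nonneg y) ht.2
    simpa using this.trans_lt (mem_ball_zero_iff.1 hy)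
  have hremainder (t : ℝ) (ht : t ∈ Set.Icc (0 : ℝ) 1) :
      ‖(1 - t) ^ n • iteratedFDeriv ℝ (n + 1) f (x + t • y) fun _ ↦ y‖ ≤ C * ‖y‖ ^ (n + 1) := by
    have hpow : ‖(1 - t) ^ n‖ ≤ 1 := by
      rw [norm_pow, Real.norm_of_nonneg (sub_nonneg.2 ht.2)]
      exact pow_le_one₀ (sub_nonneg.2 ht.2) (sub_le_self 1 ht.1)
    rw [norm_smul]
    refine (mul_le_of_le_one_left (norm_nonneg _) hpow).trans ?_
    exact (iteratedFDeriv ℝ (n + 1) f (x + t • y)).le_of_opNorm_le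
      (hball _ (hsegment t ht)).2 _ |>.trans_eq (by simp)
  rw [map_add_eq_sum_add_integral_iteratedFDeriv fun t ht ↦ (hball _ (hsegment t ht)).1,
    add_sub_cancel_left, norm_smul, norm_pow, norm_norm, mul_assoc]
  gcongr
  · simp
  · have hIoc : Set.uIoc (0 : ℝ) 1 ⊆ Set.Icc 0 1 := by
      simpa [Set.uIoc_of_le] using Set.Ioc_subset_Icc_self
    simpa using intervalIntegral.norm_integral_le_of_norm_le_const fun t ht ↦
      hremainder t (hIoc ht)

lemma isBigO_pow_of_iteratedDeriv_eq_zero [CompleteSpace F] {h : ℝ → F} {x : ℝ} {N : ℕ}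
    (hh : ContDiffAt ℝ N h x) (hzero : ∀ m < N, iteratedDeriv m h x = 0) :
    (fun t ↦ h (x + t)) =O[𝓝 0] fun t ↦ t ^ N := by
  refine Asymptotics.isBigO_norm_right.1 <|
    (taylor_isBigO_of_contDiffAt hh).congr (fun t ↦ ?_) fun t ↦ (norm_pow t N).symm
  rw [Finset.sum_eq_zero, sub_zero]
  intro k hk
  rw [iteratedFDeriv_apply_eq_iteratedDeriv_mul_prod, hzero k (Finset.mem_range.1 hk), smul_zero,
    smul_zero]

lemma taylor_two_isBigO_of_contDiffAt [CompleteSpace F] {f : E → F} {x : E}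
    (hf : ContDiffAt ℝ 3 f x) :
    (fun y ↦ f (x + y) - f x - (fderiv ℝ f x y + (1 / 2 : ℝ) • fderiv ℝ (fderiv ℝ f) x y y))
      =O[𝓝 0] fun y ↦ ‖y‖ ^ 3 := by
  refine (taylor_isBigO_of_contDiffAt (N := 3) hf).congr_left fun y ↦ ?_
  simp [Finset.sum_range_succ, iteratedFDeriv_two_apply, sub_sub, add_assoc]

end Taylor

lemma eq_zero_of_sum_pow_smul_isBigO {𝕜 F : Type*} [NontriviallyNormedField 𝕜]
    [NormedAddCommGroup F] [NormedSpace 𝕜 F] {N : ℕ} {c : Fin N → F}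
    (h : (fun t : 𝕜 ↦ ∑ k : Fin N, t ^ (k : ℕ) • c k) =O[𝓝 0] fun t ↦ t ^ N) : c = 0 := by
  induction N with
  | zero => exact Subsingleton.elim _ _
  | succ N ih =>
    simp only [Fin.sum_univ_castSucc, Fin.val_castSucc, Fin.val_last] at h
    have htop : (fun t : 𝕜 ↦ t ^ N • c (.last N)) =O[𝓝 0] fun t ↦ t ^ N := by
      simpa using (Asymptotics.isBigO_refl (fun t : 𝕜 ↦ t ^ N) (𝓝 0)).smul
        (Asymptotics.isBigO_const_const (c (.last N)) (one_ne_zero (α := 𝕜)) (𝓝 0))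
    have hlower : (fun k : Fin N ↦ c k.castSucc) = 0 :=
      ih <| ((h.trans (Asymptotics.isLittleO_pow_pow N.lt_succ_self).isBigO).sub htop).congr_left
        fun t ↦ add_sub_cancel_right _ _
    have hlower' (k : Fin N) : c k.castSucc = 0 := congrFun hlower k
    have hlast : c (.last N) = 0 := by
      simp only [hlower', smul_zero, Finset.sum_const_zero, zero_add] at h
      simpa using Asymptotics.IsBigO.continuousMultilinearMap_apply_eq_zero (n := N)
        (p := ContinuousMultilinearMap.mkPiRing 𝕜 (Fin N) (c (.last N)))
        (by simpa [norm_pow] using h.norm_right) 1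
    funext k
    exact Fin.lastCases hlast hlower' k

section Straightening

variable {𝕜 E F M : Type*} [RCLike 𝕜] [NormedAddCommGroup E] [NormedSpace 𝕜 E]
  [NormedAddCommGroup F] [NormedSpace 𝕜 F] [NormedAddCommGroup M] [NormedSpace 𝕜 M]

variable (𝕜) in
/-- `G` is a local `C²` parametrization at `a`, tangent to the identity, in which `H` becomes the
affine map `y ↦ H a + DH(a) y`; in particular `G` maps `ker DH(a)` to the fibre of `H` through
`a`. -/
structure IsStraightening (H : E → F) (a : E) (G : E → E) : Prop where
  map_zero : G 0 = a
  contDiffAt : ContDiffAt 𝕜 2 G 0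
  fderiv_zero : fderiv 𝕜 G 0 = .id 𝕜 E
  eventually_apply : ∀ᶠ y in 𝓝 0, H (G y) = H a + fderiv 𝕜 H a y

/-- Near `a`, the tangent spaces `ker DH(x)` of the fibre of `H` through `a` are isotropic for the
bilinear map `ω`. -/
def HasIsotropicFiberAt (ω : E →L[𝕜] E →L[𝕜] M) (H : E → F) (a : E) : Prop :=
  ∀ᶠ x in 𝓝 a, H x = H a → ∀ u v, fderiv 𝕜 H x u = 0 → fderiv 𝕜 H x v = 0 → ω u v = 0

variable {H : E → F} {a : E} {G : E → E} {ω : E →L[𝕜] E →L[𝕜] M}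

lemma exists_isStraightening [CompleteSpace E] (hH : ContDiffAt 𝕜 2 H a)
    (hsplit : (fderiv 𝕜 H a).HasRightInverse) : ∃ G, IsStraightening 𝕜 H a G := by
  obtain ⟨R, hR⟩ := hsplit
  set A := fderiv 𝕜 H a
  have hA' : HasFDerivAt H A a := (hH.differentiableAt (by simp)).hasFDerivAt
  -- `A (Φ x) = H x - H a`, so a local inverse of `Φ` straightens `H`.
  let Φ : E → E := fun x ↦ (x - a) + R (H x - H a - A (x - a))
  have hAΦ (x : E) : A (Φ x) = H x - H a := by simp [Φ, hR (_ : F)]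
  have hΦa : Φ a = 0 := by simp [Φ]
  have hΦ : ContDiffAt 𝕜 2 Φ a := by fun_prop
  have hΦ' : HasFDerivAt Φ (ContinuousLinearEquiv.refl 𝕜 E : E →L[𝕜] E) a := by
    have hid := (hasFDerivAt_id (𝕜 := 𝕜) a).sub_const a
    refine (hid.add (R.hasFDerivAt.comp a
      ((hA'.sub_const (H a)).sub (A.hasFDerivAt.comp a hid)))).congr_fderiv ?_
    ext v
    simp
  have hstrict := hΦ.hasStrictFDerivAt' hΦ' (by simp)
  refine ⟨hΦ.localInverse hΦ' (by simp), ?_, ?_, ?_, ?_⟩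
  · simpa only [hΦa] using hΦ.localInverse_apply_image hΦ' (by simp)
  · simpa only [hΦa] using hΦ.to_localInverse hΦ' (by simp)
  · have hinv' := hstrict.to_localInverse.hasFDerivAt
    rw [hΦa] at hinv'
    exact hinv'.fderiv
  · have hinv := hstrict.eventually_right_inverse
    rw [hΦa] at hinv
    filter_upwards [hinv] with y hy
    rw [← sub_eq_iff_eq_add', ← hAΦ]
    exact congrArg A hy

namespace IsStraightening

lemma tendsto (hG : IsStraightening 𝕜 H a G) : Tendsto G (𝓝 0) (𝓝 a) := by
  simpa only [hG.map_zero] using hG.contDiffAt.continuousAt.tendsto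

lemma hasFDerivAt_fderiv (hG : IsStraightening 𝕜 H a G) :
    HasFDerivAt (fderiv 𝕜 G) (fderiv 𝕜 (fderiv 𝕜 G) 0) 0 :=
  ((hG.contDiffAt.fderiv_right (m := 1) (by norm_num)).differentiableAt (by simp)).hasFDerivAt

lemma eventually_fderiv_comp (hG : IsStraightening 𝕜 H a G) (hH : ContDiffAt 𝕜 2 H a) :
    ∀ᶠ y in 𝓝 0, (fderiv 𝕜 H (G y)).comp (fderiv 𝕜 G y) = fderiv 𝕜 H a := by
  have hHdiff := hG.tendsto.eventually (hH.eventually (by simp))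
  have hGdiff := hG.contDiffAt.eventually (by simp)
  filter_upwards [hG.eventually_apply.eventually_nhds, hGdiff, hHdiff] with y hy hGy hHy
  have hcomp := (hHy.differentiableAt (by simp)).hasFDerivAt.comp y
    (hGy.differentiableAt (by simp)).hasFDerivAt
  exact (hcomp.congr_of_eventuallyEq (EventuallyEq.symm hy)).unique
    ((fderiv 𝕜 H a).hasFDerivAt.const_add (H a))

lemma fderiv_apply_fderiv_fderiv (hG : IsStraightening 𝕜 H a G) (hH : ContDiffAt 𝕜 2 H a)
    (w u : E) :
    fderiv 𝕜 H a (fderiv 𝕜 (fderiv 𝕜 G) 0 w u) = -fderiv 𝕜 (fderiv 𝕜 H) a w u := by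
  have hH' : HasFDerivAt (fderiv 𝕜 H) (fderiv 𝕜 (fderiv 𝕜 H) a) (G 0) := by
    rw [hG.map_zero]
    exact ((hH.fderiv_right (m := 1) (by norm_num)).differentiableAt (by simp)).hasFDerivAt
  have hGdiff := (hG.contDiffAt.differentiableAt (by simp)).hasFDerivAt
  have hconst := (((hH'.comp 0 hGdiff).clm_comp hG.hasFDerivAt_fderiv).congr_of_eventuallyEq
    (EventuallyEq.symm (hG.eventually_fderiv_comp hH))).unique (hasFDerivAt_const _ _)
  have happly := congrArg (fun T : E →L[𝕜] E →L[𝕜] F ↦ T w u) hconst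
  simp only [hG.fderiv_zero] at happly
  exact eq_neg_of_add_eq_zero_left (by simpa [hG.map_zero] using happly)

lemma isotropic_fderiv_fderiv (hG : IsStraightening 𝕜 H a G) (hH : ContDiffAt 𝕜 2 H a)
    (hω : HasIsotropicFiberAt ω H a) {u v w : E} (hu : fderiv 𝕜 H a u = 0)
    (hv : fderiv 𝕜 H a v = 0) (hw : fderiv 𝕜 H a w = 0) :
    ω (fderiv 𝕜 (fderiv 𝕜 G) 0 w u) v + ω u (fderiv 𝕜 (fderiv 𝕜 G) 0 w v) = 0 := by
  have hline : HasDerivAt (fun s : 𝕜 ↦ s • w) w 0 := by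
    simpa using (hasDerivAt_id (0 : 𝕜)).smul_const w
  have hline0 : Tendsto (fun s : 𝕜 ↦ s • w) (𝓝 0) (𝓝 0) := by
    simpa using hline.continuousAt.tendsto
  have hvanish : ∀ᶠ s in 𝓝 (0 : 𝕜), ω (fderiv 𝕜 G (s • w) u) (fderiv 𝕜 G (s • w) v) = 0 := by
    filter_upwards [hline0.eventually (hG.tendsto.eventually hω),
      hline0.eventually hG.eventually_apply,
      hline0.eventually (hG.eventually_fderiv_comp hH)] with s hiso happly hcomp
    have hker {z : E} (hz : fderiv 𝕜 H a z = 0) :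
        fderiv 𝕜 H (G (s • w)) (fderiv 𝕜 G (s • w) z) = 0 := by
      rw [← ContinuousLinearMap.comp_apply, hcomp, hz]
    exact hiso (by simp [happly, hw]) _ _ (hker hu) (hker hv)
  have hG' : HasDerivAt (fun s : 𝕜 ↦ fderiv 𝕜 G (s • w)) (fderiv 𝕜 (fderiv 𝕜 G) 0 w) 0 :=
    HasFDerivAt.comp_hasDerivAt 0 (by simpa using hG.hasFDerivAt_fderiv) hline
  have hG'_apply (z : E) := hG'.clm_apply (hasDerivAt_const (0 : 𝕜) z)
  have hpairing := (ω.hasFDerivAt.comp_hasDerivAt 0 (hG'_apply u)).clm_apply (hG'_apply v)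
  have := (hpairing.congr_of_eventuallyEq (EventuallyEq.symm hvanish)).unique
    (hasDerivAt_const _ _)
  simpa [hG.fderiv_zero] using this

end IsStraightening

-- `u + s u'` and `v + s v'` agree to first order in `s` with vector fields tangent to the fibre
-- along a curve leaving `a` in the direction `w`.
lemma HasIsotropicFiberAt.add_eq_zero [CompleteSpace E] (hω : HasIsotropicFiberAt ω H a)
    (hH : ContDiffAt 𝕜 2 H a) (hsplit : (fderiv 𝕜 H a).HasRightInverse) {u v w u' v' : E}
    (hu : fderiv 𝕜 H a u = 0) (hv : fderiv 𝕜 H a v = 0) (hw : fderiv 𝕜 H a w = 0)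
    (hu' : fderiv 𝕜 H a u' = -fderiv 𝕜 (fderiv 𝕜 H) a w u)
    (hv' : fderiv 𝕜 H a v' = -fderiv 𝕜 (fderiv 𝕜 H) a w v) : ω u' v + ω u v' = 0 := by
  obtain ⟨G, hG⟩ := exists_isStraightening hH hsplit
  set Q := fderiv 𝕜 (fderiv 𝕜 G) 0
  have hu'Q : ω (u' - Q w u) v = 0 := hω.self_of_nhds rfl _ _
    (by rw [map_sub, hu', hG.fderiv_apply_fderiv_fderiv hH, sub_self]) hv
  have hv'Q : ω u (v' - Q w v) = 0 := hω.self_of_nhds rfl _ _ hu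
    (by rw [map_sub, hv', hG.fderiv_apply_fderiv_fderiv hH, sub_self])
  rw [map_sub, sub_apply, sub_eq_zero] at hu'Q
  rw [map_sub, sub_eq_zero] at hv'Q
  rw [hu'Q, hv'Q]
  exact hG.isotropic_fderiv_fderiv hH hω hu hv hw

end Straightening

section Curve

variable {E F : Type*} [NormedAddCommGroup E] [NormedSpace ℝ E] [NormedAddCommGroup F]
  [NormedSpace ℝ F]

/-- The curve `t ↦ t⁴ v₄ + t⁵ v₅ + t⁶ v₆ + t⁷ v₇ + t¹¹ v₁₁`: the coordinate-free form of `f17`, each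
coefficient being labelled by its exponent. -/
def curve4567 (v₄ v₅ v₆ v₇ v₁₁ : E) (t : ℝ) : E :=
  t ^ 4 • v₄ + t ^ 5 • v₅ + t ^ 6 • v₆ + t ^ 7 • v₇ + t ^ 11 • v₁₁

variable {v₄ v₅ v₆ v₇ v₁₁ : E}

lemma curve4567_zero : curve4567 v₄ v₅ v₆ v₇ v₁₁ 0 = 0 := by
  simp [curve4567]

lemma contDiff_curve4567 {n : WithTop ℕ∞} : ContDiff ℝ n (curve4567 v₄ v₅ v₆ v₇ v₁₁) := by
  unfold curve4567
  fun_prop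

lemma curve4567_isBigO : curve4567 v₄ v₅ v₆ v₇ v₁₁ =O[𝓝 0] fun t ↦ t ^ 4 := by
  let g : ℝ → E := fun t ↦ v₄ + t • v₅ + t ^ 2 • v₆ + t ^ 3 • v₇ + t ^ 7 • v₁₁
  have hg : Continuous g := by fun_prop
  refine ((Asymptotics.isBigO_refl (fun t : ℝ ↦ t ^ 4) (𝓝 0)).smul
    ((hg.tendsto 0).isBigO_one ℝ)).congr (fun t ↦ ?_) (by simp)
  simp only [g, curve4567]
  module

/-- The coefficients of degrees below `12` of `A γ + ½ B(γ, γ)` for `γ = curve4567 v₄ v₅ v₆ v₇ v₁₁`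
and a symmetric `B`. -/
def quadraticCoeffs4567 (A : E →L[ℝ] F) (B : E →L[ℝ] E →L[ℝ] F) (v₄ v₅ v₆ v₇ v₁₁ : E) :
    Fin 12 → F :=
  ![0, 0, 0, 0, A v₄, A v₅, A v₆, A v₇, (1 / 2 : ℝ) • B v₄ v₄, B v₅ v₄,
    B v₄ v₆ + (1 / 2 : ℝ) • B v₅ v₅, A v₁₁ + B v₄ v₇ + B v₅ v₆]

lemma quadratic_curve4567_sub_isBigO (A : E →L[ℝ] F) {B : E →L[ℝ] E →L[ℝ] F}
    (hB : ∀ u v, B u v = B v u) :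
    (fun t ↦ A (curve4567 v₄ v₅ v₆ v₇ v₁₁ t)
        + (1 / 2 : ℝ) • B (curve4567 v₄ v₅ v₆ v₇ v₁₁ t) (curve4567 v₄ v₅ v₆ v₇ v₁₁ t)
        - ∑ k : Fin 12, t ^ (k : ℕ) • quadraticCoeffs4567 A B v₄ v₅ v₆ v₇ v₁₁ k)
      =O[𝓝 0] fun t ↦ t ^ 12 := by
  let g : ℝ → F := fun t ↦
    (B v₅ v₇ + (1 / 2 : ℝ) • B v₆ v₆) + t • B v₆ v₇ + t ^ 2 • (1 / 2 : ℝ) • B v₇ v₇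
      + t ^ 3 • B v₄ v₁₁ + t ^ 4 • B v₅ v₁₁ + t ^ 5 • B v₆ v₁₁ + t ^ 6 • B v₇ v₁₁
      + t ^ 10 • (1 / 2 : ℝ) • B v₁₁ v₁₁
  have hg : Continuous g := by fun_prop
  refine ((Asymptotics.isBigO_refl (fun t : ℝ ↦ t ^ 12) (𝓝 0)).smul
    ((hg.tendsto 0).isBigO_one ℝ)).congr (fun t ↦ ?_) (by simp)
  have hsum : ∑ k : Fin 12, t ^ (k : ℕ) • quadraticCoeffs4567 A B v₄ v₅ v₆ v₇ v₁₁ k =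
      t ^ 4 • A v₄ + t ^ 5 • A v₅ + t ^ 6 • A v₆ + t ^ 7 • A v₇ + t ^ 8 • (1 / 2 : ℝ) • B v₄ v₄
        + t ^ 9 • B v₅ v₄ + t ^ 10 • (B v₄ v₆ + (1 / 2 : ℝ) • B v₅ v₅)
        + t ^ 11 • (A v₁₁ + B v₄ v₇ + B v₅ v₆) := by
    simp [quadraticCoeffs4567, Fin.sum_univ_succ, add_assoc]
  simp only [hsum, g, curve4567, map_add, map_smul, add_apply, smul_apply, hB v₅ v₄, hB v₆ v₄,
    hB v₇ v₄, hB v₁₁ v₄, hB v₆ v₅, hB v₇ v₅, hB v₁₁ v₅, hB v₇ v₆, hB v₁₁ v₆, hB v₁₁ v₇]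
  module

lemma quadraticCoeffs4567_eq_zero [CompleteSpace F] {H : E → F} {a : E} (hH : ContDiffAt ℝ 3 H a)
    (hvanish : (fun t ↦ H (a + curve4567 v₄ v₅ v₆ v₇ v₁₁ t) - H a) =O[𝓝 0] fun t ↦ t ^ 12) :
    quadraticCoeffs4567 (fderiv ℝ H a) (fderiv ℝ (fderiv ℝ H) a) v₄ v₅ v₆ v₇ v₁₁ = 0 := by
  have hsymm : IsSymmSndFDerivAt ℝ H a := hH.isSymmSndFDerivAt (by simp; norm_num)
  have hcurve : Tendsto (curve4567 v₄ v₅ v₆ v₇ v₁₁) (𝓝 0) (𝓝 0) := by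
    simpa only [curve4567_zero] using
      (contDiff_curve4567 (n := 0)).continuous.tendsto' (x := 0) _ rfl
  have hcube : (fun t ↦ ‖curve4567 v₄ v₅ v₆ v₇ v₁₁ t‖ ^ 3) =O[𝓝 0] fun t ↦ t ^ 12 := by
    have hnorm : (fun t ↦ ‖curve4567 v₄ v₅ v₆ v₇ v₁₁ t‖) =O[𝓝 0] fun t ↦ t ^ 4 :=
      curve4567_isBigO.norm_left
    simpa only [← pow_mul] using hnorm.pow 3
  have htaylor := ((taylor_two_isBigO_of_contDiffAt hH).comp_tendsto hcurve).trans hcube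
  have hquadratic := quadratic_curve4567_sub_isBigO (v₄ := v₄) (v₅ := v₅) (v₆ := v₆) (v₇ := v₇)
    (v₁₁ := v₁₁) (fderiv ℝ H a) hsymm
  refine eq_zero_of_sum_pow_smul_isBigO (𝕜 := ℝ) <|
    ((hvanish.sub htaylor).sub hquadratic).congr_left fun t ↦ ?_
  simp only [Function.comp_apply]
  abel

theorem HasIsotropicFiberAt.eq_zero_of_curve4567_isBigO [CompleteSpace E] [CompleteSpace F]
    {M : Type*} [NormedAddCommGroup M] [NormedSpace ℝ M] {ω : E →L[ℝ] E →L[ℝ] M} {H : E → F}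
    {a : E} (hω : HasIsotropicFiberAt ω H a) (hH : ContDiffAt ℝ 3 H a)
    (hsplit : (fderiv ℝ H a).HasRightInverse)
    (hvanish : (fun t ↦ H (a + curve4567 v₄ v₅ v₆ v₇ v₁₁ t) - H a) =O[𝓝 0] fun t ↦ t ^ 12) :
    ω v₄ v₁₁ = 0 := by
  have hcoeff := congrFun (quadraticCoeffs4567_eq_zero hH hvanish)
  set A := fderiv ℝ H a
  set B := fderiv ℝ (fderiv ℝ H) a
  have hA₄ : A v₄ = 0 := hcoeff 4
  have hA₅ : A v₅ = 0 := hcoeff 5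
  have hA₆ : A v₆ = 0 := hcoeff 6
  have hA₇ : A v₇ = 0 := hcoeff 7
  have hB₄₄ : B v₄ v₄ = 0 := (smul_eq_zero_iff_right (by norm_num)).1 (hcoeff 8)
  have hB₅₄ : B v₅ v₄ = 0 := hcoeff 9
  have hA₁₁ : A v₁₁ + B v₄ v₇ + B v₅ v₆ = 0 := hcoeff 11
  have hH₂ : ContDiffAt ℝ 2 H a := hH.of_le (by norm_num)
  obtain ⟨x, hx⟩ := hsplit.surjective (-B v₄ v₇)
  obtain ⟨y, hy⟩ := hsplit.surjective (-B v₅ v₆)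
  have hωx : ω v₄ x = 0 := by
    simpa using hω.add_eq_zero hH₂ hsplit (u' := 0) hA₄ hA₇ hA₄ (by simp [B, hB₄₄]) hx
  have hωy : ω v₄ y = 0 := by
    simpa using hω.add_eq_zero hH₂ hsplit (u' := 0) hA₄ hA₆ hA₅ (by simp [B, hB₅₄]) hy
  have hker : A (v₁₁ - x - y) = 0 := by
    rw [map_sub, map_sub, hx, hy, sub_neg_eq_add, sub_neg_eq_add, hA₁₁]
  have hωker : ω v₄ (v₁₁ - x - y) = 0 := hω.self_of_nhds rfl _ _ hA₄ hker
  simpa [hωx, hωy] using hωker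

end Curve

section Symplectic

variable {n : ℕ}

lemma isBilinearMap_omega0 (n : ℕ) : IsBilinearMap ℝ (omega0 n) where
  add_left u u' v := by
    simp only [omega0, Pi.add_apply, ← Finset.sum_add_distrib]
    exact Finset.sum_congr rfl fun i _ ↦ by ring
  smul_left c u v := by
    simp only [omega0, Pi.smul_apply, smul_eq_mul, Finset.mul_sum]
    exact Finset.sum_congr rfl fun i _ ↦ by ring
  add_right u v v' := by
    simp only [omega0, Pi.add_apply, ← Finset.sum_add_distrib]
    exact Finset.sum_congr rfl fun i _ ↦ by ring
  smul_right c u v := by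
    simp only [omega0, Pi.smul_apply, smul_eq_mul, Finset.mul_sum]
    exact Finset.sum_congr rfl fun i _ ↦ by ring

lemma IsLagrangianMap.contDiffAt {H : (Fin (2 * n) → ℝ) → Fin n → ℝ} (hH : IsLagrangianMap n H)
    {N : ℕ} : ContDiffAt ℝ N H 0 :=
  let ⟨_, ⟨_, hU, hHU⟩, _⟩ := hH
  (hHU.contDiffAt hU).of_le (mod_cast le_top)

lemma IsLagrangianMap.hasIsotropicFiberAt {H : (Fin (2 * n) → ℝ) → Fin n → ℝ}
    (hH : IsLagrangianMap n H) :
    HasIsotropicFiberAt (isBilinearMap_omega0 n).toContinuousBilinearMap H 0 := by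
  obtain ⟨h0, -, -, hiso⟩ := hH
  simpa only [HasIsotropicFiberAt, h0, IsBilinearMap.toContinuousBilinearMap_apply] using hiso

lemma isLagrangianMap_of_continuousLinearMap (L : (Fin (2 * n) → ℝ) →L[ℝ] Fin n → ℝ)
    (hsurj : Function.Surjective L) (hiso : ∀ u v, L u = 0 → L v = 0 → omega0 n u v = 0) :
    IsLagrangianMap n L :=
  ⟨map_zero L, ⟨Set.univ, univ_mem, L.contDiff.contDiffOn⟩, by rwa [L.fderiv],
    .of_forall fun x _ ↦ by simpa only [L.fderiv] using hiso⟩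

/-- The projection `(p₁, q₁, …, pₙ, qₙ) ↦ (q₁, …, qₙ)`. -/
def qProj (n : ℕ) : (Fin (2 * n) → ℝ) →L[ℝ] Fin n → ℝ :=
  .pi fun i ↦ .proj ⟨2 * i.val + 1, by omega⟩

lemma qProj_apply (x : Fin (2 * n) → ℝ) (i : Fin n) :
    qProj n x i = x ⟨2 * i.val + 1, by omega⟩ :=
  rfl

lemma qProj_surjective : Function.Surjective (qProj n) := by
  refine fun y ↦ ⟨fun j ↦ y ⟨j.val / 2, by omega⟩, funext fun i ↦ ?_⟩
  exact congrArg y (Fin.ext (by dsimp only; omega))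

lemma isLagrangianMap_qProj : IsLagrangianMap n (qProj n) := by
  refine isLagrangianMap_of_continuousLinearMap _ qProj_surjective fun u v hu hv ↦
    Finset.sum_eq_zero fun i _ ↦ ?_
  have hui := congrFun hu i
  have hvi := congrFun hv i
  rw [qProj_apply, Pi.zero_apply] at hui hvi
  rw [hui, hvi, mul_zero, zero_mul, sub_zero]

lemma qProj_f17 (t : ℝ) (i : Fin n) : qProj n (f17 n t) i = if i.val = 0 then t ^ 11 else 0 := by
  obtain ⟨i, hi⟩ := i
  simp only [qProj_apply, f17, padTo]
  by_cases h : i < 4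
  · interval_cases i <;> simp
  · simp [show ¬2 * i + 1 < 8 by omega, show i ≠ 0 by omega]

lemma f17_eq_curve4567 (n : ℕ) :
    f17 n = curve4567 (padTo (2 * n) 8 (Pi.single 0 1)) (padTo (2 * n) 8 (Pi.single 2 1))
      (padTo (2 * n) 8 (Pi.single 4 1)) (padTo (2 * n) 8 (Pi.single 6 1))
      (padTo (2 * n) 8 (Pi.single 1 1)) := by
  funext t ⟨i, hi⟩
  simp only [f17, curve4567, padTo, Pi.add_apply, Pi.smul_apply]
  by_cases h : i < 8
  · interval_cases i <;> simp
  · simp [h]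

lemma omega0_padTo_single (hn : 1 ≤ n) :
    omega0 n (padTo (2 * n) 8 (Pi.single 0 1)) (padTo (2 * n) 8 (Pi.single 1 1)) = 1 := by
  rw [omega0, Finset.sum_eq_single ⟨0, hn⟩]
  · simp [padTo]
  · intro i _ hi
    have : i.val ≠ 0 := fun h ↦ hi (Fin.ext h)
    simp [padTo, Fin.ext_iff, this]
  · simp

lemma IsLagrangianMap.comp_f17_isBigO {H : (Fin (2 * n) → ℝ) → Fin n → ℝ}
    (hH : IsLagrangianMap n H) {N : ℕ}
    (hzero : ∀ i, ∀ m < N, iteratedDeriv m (fun t ↦ H (f17 n t) i) 0 = 0) :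
    (fun t ↦ H (f17 n t)) =O[𝓝 0] fun t ↦ t ^ N := by
  refine Asymptotics.isBigO_pi.2 fun i ↦ ?_
  have hsmooth : ContDiffAt ℝ N (fun t ↦ H (f17 n t)) 0 := by
    have hf0 : f17 n 0 = 0 := by rw [f17_eq_curve4567, curve4567_zero]
    have hf : ContDiffAt ℝ N (f17 n) 0 := by
      rw [f17_eq_curve4567]
      exact contDiff_curve4567.contDiffAt
    exact ContDiffAt.comp 0 (by
      rw [hf0]
      exact hH.contDiffAt) hf
  simpa using isBigO_pow_of_iteratedDeriv_eq_zero (contDiffAt_pi.1 hsmooth i) (hzero i)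

lemma IsLagrangianMap.exists_iteratedDeriv_comp_f17_ne_zero (hn : 1 ≤ n)
    {H : (Fin (2 * n) → ℝ) → Fin n → ℝ} (hH : IsLagrangianMap n H) :
    ∃ i, ∃ m ≤ 11, iteratedDeriv m (fun t ↦ H (f17 n t) i) 0 ≠ 0 := by
  by_contra! hzero
  have hvanish := hH.comp_f17_isBigO (N := 12) fun i m hm ↦ hzero i m (by omega)
  have hsplit : (fderiv ℝ H 0).HasRightInverse :=
    .of_surjective_of_finiteDimensional hH.2.2.1
  have hω := hH.hasIsotropicFiberAt.eq_zero_of_curve4567_isBigO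
    (hH.contDiffAt (N := 3)) hsplit
    (by simpa only [zero_add, hH.1, sub_zero, f17_eq_curve4567] using hvanish)
  rw [IsBilinearMap.toContinuousBilinearMap_apply, omega0_padTo_single hn] at hω
  exact one_ne_zero hω

end Symplectic

/-- For `n < 4` the padding in `f17` truncates instead: the curve then consists of the first `2 n`
entries of `(t⁴, t¹¹, t⁵, 0, t⁶, 0, t⁷, 0)`. -/
theorem lagrangian_tangency_order_row17_4567_general (n : ℕ) (hn : 1 ≤ n) :
    (∀ H : (Fin (2 * n) → ℝ) → (Fin n → ℝ), IsLagrangianMap n H →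
      ∃ i : Fin n, ∃ m ≤ 11, iteratedDeriv m (fun t : ℝ ↦ H (f17 n t) i) 0 ≠ 0) ∧
    (∃ H : (Fin (2 * n) → ℝ) → (Fin n → ℝ), IsLagrangianMap n H ∧
      (∀ i : Fin n, ∀ m < 11, iteratedDeriv m (fun t : ℝ ↦ H (f17 n t) i) 0 = 0) ∧
      ∃ i : Fin n, iteratedDeriv 11 (fun t : ℝ ↦ H (f17 n t) i) 0 ≠ 0) := by
  refine ⟨fun H hH ↦ hH.exists_iteratedDeriv_comp_f17_ne_zero hn,
    qProj n, isLagrangianMap_qProj, fun i m hm ↦ ?_, ⟨0, hn⟩, ?_⟩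
  · simp only [qProj_f17]
    split_ifs
    · rw [iteratedDeriv_pow, zero_pow (by omega), mul_zero]
    · simp
  · simp only [qProj_f17, if_true, iteratedDeriv_pow]
    simp [Nat.descFactorial]

/-- The curve `f(t) = (t⁴, t¹¹, t⁵, 0, t⁶, 0, t⁷, 0, …, 0)` in `ℝ^{2n}`, `n ≥ 4`, has
Lagrangian tangency order `11`: (a) for every Lagrangian defining map `H` some
component of `H ∘ f` vanishes at `0` to order at most `11`, and (b) there is a
Lagrangian defining map all of whose components composed with `f` vanish to order at
least `11`, one of them to order exactly `11`. -/
theorem lagrangian_tangency_order_row17_4567 (n : ℕ) (hn : 4 ≤ n) :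
    (∀ H : (Fin (2*n) → ℝ) → (Fin n → ℝ), IsLagrangianMap n H →
      ∃ i : Fin n, ∃ m ≤ 11,
        iteratedDeriv m (fun t : ℝ => H (f17 n t) i) 0 ≠ 0) ∧
    (∃ H : (Fin (2*n) → ℝ) → (Fin n → ℝ), IsLagrangianMap n H ∧
      (∀ i : Fin n, ∀ m < 11, iteratedDeriv m (fun t : ℝ => H (f17 n t) i) 0 = 0) ∧
      ∃ i : Fin n, iteratedDeriv 11 (fun t : ℝ => H (f17 n t) i) 0 ≠ 0) := by
  exact lagrangian_tangency_order_row17_4567_general n (by omega)
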